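/- arXiv:2106.16165 — 3 statements merged into one kernel-verified Lean document; each statement's English description precedes it below -/
import Mathlib

section
/- Existence of arithmetic derivatives of controlled size: suppose a, b are coprime positive integers with c := a + b > 2 (i.e. (a,b) ≠ (1,1)). Then r := ω(abc) − 1 ≥ 1 and there exist ℤ-linearly independent derivations ψ₁, …, ψ_r ∈ 𝒯(a,b) satisfying ∏_{i=1}^r ‖ψ_i‖ ≤ (ω(abc)/(2 log 2)) · c · log c. -/
open Finset

/-- The arithmetic derivative attached to `ψ`: `d^ψ(n) = Σ_{p ∣ n} (n·v_p(n)/p)·ψ(p)`,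
with `d^ψ(0) = 0` (empty sum). Each term is written as `(n/p)·v_p(n)·ψ(p)`, exact since `p ∣ n`. -/
def dpsi (ψ : ℕ → ℤ) (n : ℤ) : ℤ :=
  ∑ p ∈ n.natAbs.primeFactors, (n / (p : ℤ)) * (n.natAbs.factorization p : ℤ) * ψ p

/-- A derivation: a function on primes (zero off primes) with finite norm. -/
def IsDeriv (ψ : ℕ → ℤ) : Prop :=
  (∀ p : ℕ, ¬ p.Prime → ψ p = 0) ∧ ∃ B : ℤ, ∀ p : ℕ, |ψ p| ≤ B

/-- The norm `‖ψ‖ = sup_p |ψ(p)|`. -/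
noncomputable def dNorm (ψ : ℕ → ℤ) : ℝ := ⨆ p : ℕ, (|ψ p| : ℝ)

/-- Membership in `𝒯(a,b)`: a derivation supported on the primes dividing `ab(a+b)`
satisfying `d^ψ(a+b) = d^ψ(a) + d^ψ(b)`. -/
def MemT (a b : ℕ) (ψ : ℕ → ℤ) : Prop :=
  IsDeriv ψ ∧ (∀ p : ℕ, p.Prime → ¬ p ∣ (a * b * (a + b)) → ψ p = 0) ∧
    dpsi ψ ((a : ℤ) + (b : ℤ)) = dpsi ψ (a : ℤ) + dpsi ψ (b : ℤ)

/-- The `ψ`-Wronskian `W^ψ(a,b) = a·d^ψ(b) − b·d^ψ(a)`. -/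
def Wpsi (ψ : ℕ → ℤ) (a b : ℤ) : ℤ := a * dpsi ψ b - b * dpsi ψ a

/-- Membership in `𝒯°(a,b)`: elements of `𝒯(a,b)` for which `a, b` are `ψ`-dependent. -/
def MemT0 (a b : ℕ) (ψ : ℕ → ℤ) : Prop := MemT a b ψ ∧ Wpsi ψ (a : ℤ) (b : ℤ) = 0

/-- The radical of `n`: product of the distinct primes dividing `n`. -/
def radN (n : ℕ) : ℕ := ∏ p ∈ n.primeFactors, p

/-- The Small Derivatives Conjecture with exponent `η`: for all but finitely many triples of
coprime positive integers `(a,b,c)` with `a+b=c`, not of the form `(1,N,q)` with `q` prime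
up to order, there is `ψ ∈ 𝒯(a,b)` with `a,b` `ψ`-independent and `‖ψ‖ < c^η`. -/
def SDC (η : ℝ) : Prop :=
  {t : ℕ × ℕ × ℕ | 0 < t.1 ∧ 0 < t.2.1 ∧ t.1 + t.2.1 = t.2.2 ∧ Nat.Coprime t.1 t.2.1 ∧
    ¬ (∃ N q : ℕ, q.Prime ∧ ({t.1, t.2.1, t.2.2} : Multiset ℕ) = {1, N, q}) ∧
    ¬ ∃ ψ : ℕ → ℤ, MemT t.1 t.2.1 ψ ∧ Wpsi ψ (t.1 : ℤ) (t.2.1 : ℤ) ≠ 0 ∧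
      dNorm ψ < (t.2.2 : ℝ) ^ η}.Finite

open MeasureTheory
open scoped ENNReal

noncomputable def mm {Γ X : Type*} [AddCommGroup Γ] [AddCommGroup X] (f : Γ →+ X) (A : Set X)
    (x : X) : ℝ≥0∞ := ∑' g : Γ, A.indicator (fun _ => (1 : ℝ≥0∞)) (x + f g)

noncomputable def VV {Γ X : Type*} [AddCommGroup Γ] [AddCommGroup X] [MeasurableSpace X]
    (μ : Measure X) (f : Γ →+ X) (A : Set X) : ℝ≥0∞ :=
  ∫⁻ x, A.indicator (fun _ => (1 : ℝ≥0∞)) x * (mm f A x)⁻¹ ∂μ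

lemma mm_shift {Γ X : Type*} [AddCommGroup Γ] [AddCommGroup X] (f : Γ →+ X) (A : Set X)
    (x : X) (h : Γ) : mm f A (x + f h) = mm f A x := by
  unfold mm
  rw [← (Equiv.addLeft h).tsum_eq (fun g => A.indicator (fun _ => (1 : ℝ≥0∞)) (x + f g))]
  simp [add_assoc]

lemma mm_meas {Γ X : Type*} [AddCommGroup Γ] [Countable Γ] [AddCommGroup X] [MeasurableSpace X]
    [MeasurableAdd X] (f : Γ →+ X) (A : Set X) (hA : MeasurableSet A) : Measurable (mm f A) := by
  unfold mm
  refine Measurable.tsum fun g => ?_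
  exact (measurable_const.indicator hA).comp (measurable_add_const (f g))

lemma VV_mono {Γ X : Type*} [AddCommGroup Γ] [Countable Γ] [AddCommGroup X] [MeasurableSpace X]
    [MeasurableAdd X] (μ : Measure X) [μ.IsAddRightInvariant] (f : Γ →+ X)
    (A B : Set X) (hA : MeasurableSet A) (hB : MeasurableSet B) (v : X)
    (hAB : ∀ x ∈ A, x + v ∈ B) (hfin : ∀ x, mm f B x ≠ ∞) : VV μ f A ≤ VV μ f B := by
  have hmA := mm_meas f A hA
  have hmB := mm_meas f B hB
  have iA : Measurable (A.indicator (fun _ => (1 : ℝ≥0∞))) := measurable_const.indicator hA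
  have iB : Measurable (B.indicator (fun _ => (1 : ℝ≥0∞))) := measurable_const.indicator hB
  let F : Γ → X → ℝ≥0∞ := fun g x =>
    A.indicator (fun _ => (1 : ℝ≥0∞)) (x + f (-g) + -v) * (mm f A (x + -v))⁻¹ *
      ((mm f B x)⁻¹ * B.indicator (fun _ => (1 : ℝ≥0∞)) x)
  have hF : ∀ g, Measurable (F g) := by
    intro g
    refine Measurable.mul (Measurable.mul ?_ ?_) (Measurable.mul hmB.inv iB)
    · exact iA.comp ((measurable_add_const (-v)).comp (measurable_add_const _))
    · exact (hmA.comp (measurable_add_const (-v))).inv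
  calc VV μ f A = ∫⁻ x, ∑' g, F g (x + (f g + v)) ∂μ := by
        unfold VV
        refine lintegral_congr fun x => ?_
        have h1 : ∀ g, F g (x + (f g + v)) =
            (A.indicator (fun _ => (1 : ℝ≥0∞)) x * (mm f A x)⁻¹ * (mm f B (x + v))⁻¹) *
              B.indicator (fun _ => (1 : ℝ≥0∞)) (x + v + f g) := by
          intro g
          simp only [F]
          have e1 : x + (f g + v) + f (-g) + -v = x := by rw [map_neg]; abel
          have e2 : x + (f g + v) + -v = x + f g := by abel
          have e3 : x + (f g + v) = x + v + f g := by abel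
          rw [e1, e2, e3, mm_shift, mm_shift]
          ring
        simp_rw [h1]
        rw [ENNReal.tsum_mul_left]
        by_cases hx : x ∈ A
        · have : (∑' g, B.indicator (fun _ => (1 : ℝ≥0∞)) (x + v + f g)) = mm f B (x + v) := rfl
          rw [this, mul_assoc, ENNReal.inv_mul_cancel _ (hfin _), mul_one]
          intro h0
          have := (ENNReal.tsum_eq_zero.1 h0) 0
          simp [hAB x hx] at this
        · simp [hx]
    _ = ∑' g, ∫⁻ x, F g (x + (f g + v)) ∂μ := by
        rw [lintegral_tsum]
        exact fun g => ((hF g).comp (measurable_add_const _)).aemeasurable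
    _ = ∑' g, ∫⁻ x, F g x ∂μ := by
        congr 1; ext g
        exact lintegral_add_right_eq_self (F g) _
    _ = ∫⁻ x, ∑' g, F g x ∂μ := by
        rw [lintegral_tsum]
        exact fun g => (hF g).aemeasurable
    _ ≤ VV μ f B := by
        unfold VV
        refine lintegral_mono fun x => ?_
        simp only [F]
        rw [ENNReal.tsum_mul_right, ENNReal.tsum_mul_right]
        have : (∑' g, A.indicator (fun _ => (1 : ℝ≥0∞)) (x + f (-g) + -v)) = mm f A (x + -v) := by
          unfold mm
          rw [← (Equiv.neg Γ).tsum_eq]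
          simp only [Equiv.neg_apply, neg_neg]
          congr 1; ext g
          rw [show x + f g + -v = x + -v + f g by abel]
        rw [this, mul_comm (B.indicator _ _)]
        exact mul_le_of_le_one_left' (ENNReal.mul_inv_le_one _)

lemma mm_slice {Γ X Y : Type*} [AddCommGroup Γ] [AddCommGroup X] [AddCommGroup Y]
    (f : Γ →+ X) (C : Set (X × Y)) (x : X) (y : Y) :
    mm ((AddMonoidHom.inl X Y).comp f) C (x, y) = mm f ((fun x => (x, y)) ⁻¹' C) x := by
  unfold mm
  congr 1; ext g
  have : (x, y) + ((AddMonoidHom.inl X Y).comp f) g = (x + f g, y) :=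
    Prod.ext rfl (add_zero y)
  rw [this]
  rfl

lemma growth_prod {Γ X Y : Type*} [AddCommGroup Γ] [Countable Γ]
    [NormedAddCommGroup X] [NormedSpace ℝ X] [FiniteDimensional ℝ X] [MeasurableSpace X]
    [BorelSpace X]
    [NormedAddCommGroup Y] [NormedSpace ℝ Y] [FiniteDimensional ℝ Y] [MeasurableSpace Y]
    [BorelSpace Y]
    (μ : Measure X) [μ.IsAddRightInvariant] [SFinite μ] (ν : Measure Y) [ν.IsAddHaarMeasure]
    (f : Γ →+ X) (A B : Set (X × Y)) (hA : MeasurableSet A) (hB : MeasurableSet B)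
    (ρ : ℝ) (hρ : 1 ≤ ρ)
    (hAB : ∀ x x0 y, (x, y) ∈ A → (x0, y) ∈ A → (x + (ρ - 1) • x0, ρ • y) ∈ B)
    (hfin : ∀ z, mm ((AddMonoidHom.inl X Y).comp f) B z ≠ ∞) :
    ENNReal.ofReal ρ ^ (Module.finrank ℝ Y) * VV (μ.prod ν) ((AddMonoidHom.inl X Y).comp f) A
      ≤ VV (μ.prod ν) ((AddMonoidHom.inl X Y).comp f) B := by
  have key : ∀ C : Set (X × Y), MeasurableSet C →
      VV (μ.prod ν) ((AddMonoidHom.inl X Y).comp f) C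
        = ∫⁻ y, VV μ f ((fun x => (x, y)) ⁻¹' C) ∂ν := by
    intro C hC
    unfold VV
    rw [lintegral_prod_symm]
    · refine lintegral_congr fun y => lintegral_congr fun x => ?_
      rw [mm_slice]
      rfl
    · exact ((measurable_const.indicator hC).mul (mm_meas _ C hC).inv).aemeasurable
  have keym : ∀ C : Set (X × Y), MeasurableSet C →
      Measurable fun y => VV μ f ((fun x => (x, y)) ⁻¹' C) := by
    intro C hC
    unfold VV
    have : Measurable fun z : X × Y => C.indicator (fun _ => (1 : ℝ≥0∞)) z *
       (mm ((AddMonoidHom.inl X Y).comp f) C z)⁻¹ :=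
      ((measurable_const.indicator hC).mul (mm_meas _ C hC).inv)
    convert this.lintegral_prod_left' (μ := μ) using 3
    ext x
    rw [mm_slice]
    rfl
  rw [key A hA, key B hB]
  have hρ0 : ρ ≠ 0 := by linarith
  have hmap := Measure.map_addHaar_smul ν (inv_ne_zero hρ0)
  have h2 : ∀ y, VV μ f ((fun x => (x, ρ⁻¹ • y)) ⁻¹' A) ≤ VV μ f ((fun x => (x, y)) ⁻¹' B) := by
    intro y
    by_cases hne : ∃ x0, (x0, ρ⁻¹ • y) ∈ A
    · obtain ⟨x0, hx0⟩ := hne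
      refine VV_mono μ f _ _ (measurable_prodMk_right hA) (measurable_prodMk_right hB)
        ((ρ - 1) • x0) ?_ ?_
      · intro x hx
        have := hAB x x0 _ hx hx0
        simpa [smul_smul, hρ0] using this
      · intro x
        rw [← mm_slice]
        exact hfin (x, y)
    · push Not at hne
      have : VV μ f ((fun x => (x, ρ⁻¹ • y)) ⁻¹' A) = 0 := by
        unfold VV
        simp [Set.indicator, hne]
      rw [this]; exact zero_le
  calc _ = ∫⁻ y, VV μ f ((fun x => (x, y)) ⁻¹' A) ∂(Measure.map (fun y => ρ⁻¹ • y) ν) := by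
        rw [hmap, lintegral_smul_measure]
        congr 1
        rw [inv_pow, inv_inv, abs_of_pos (by positivity), ENNReal.ofReal_pow (by linarith)]
    _ = ∫⁻ y, VV μ f ((fun x => (x, ρ⁻¹ • y)) ⁻¹' A) ∂ν := by
        rw [lintegral_map (keym A hA) (measurable_const_smul _)]
    _ ≤ _ := lintegral_mono h2

def KK {ι : Type*} (t : ℝ) : Set (ι → ℝ) := {x | ∀ p, 0 ≤ x p ∧ x p < t}

lemma KK_eq {ι : Type*} (t : ℝ) : (KK t : Set (ι → ℝ)) = Set.pi Set.univ fun _ => Set.Ico 0 t := by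
  ext x; simp [KK]

lemma KK_meas {ι : Type*} [Fintype ι] (t : ℝ) : MeasurableSet (KK t : Set (ι → ℝ)) := by
  rw [KK_eq]
  exact MeasurableSet.univ_pi fun _ => measurableSet_Ico

lemma growth {Γ ι : Type*} [AddCommGroup Γ] [Countable Γ] [Fintype ι]
    (W : Submodule ℝ (ι → ℝ)) (f : Γ →+ (ι → ℝ)) (hf : ∀ g, f g ∈ W) (s t : ℝ) (hs : 0 < s)
    (hst : s ≤ t) (d : ℕ) (hd : Module.finrank ℝ W + d = Fintype.card ι)
    (hfin : ∀ z, mm f (KK t) z ≠ ∞) :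
    ENNReal.ofReal (t / s) ^ d * VV volume f (KK s) ≤ VV volume f (KK t) := by
  obtain ⟨W', hW⟩ := Submodule.exists_isCompl W
  have hd' : Module.finrank ℝ W' = d := by
    have := Submodule.finrank_add_eq_of_isCompl hW
    rw [Module.finrank_fintype_fun_eq_card] at this
    omega
  let e := (Submodule.prodEquivOfIsCompl W W' hW).toContinuousLinearEquiv
  let μ : Measure W := Measure.addHaar
  let ν : Measure W' := Measure.addHaar
  have hmapH : (Measure.map e (μ.prod ν)).IsAddHaarMeasure := e.isAddHaarMeasure_map (μ.prod ν)
  obtain ⟨c, hc⟩ : ∃ c : NNReal, (volume : Measure (ι → ℝ)) = c • Measure.map e (μ.prod ν) :=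
    ⟨_, Measure.isAddLeftInvariant_eq_smul _ _⟩
  let f' : Γ →+ W := f.codRestrict W.toAddSubgroup hf
  have hmm : ∀ C z, mm ((AddMonoidHom.inl W W').comp f') (e ⁻¹' C) z = mm f C (e z) := by
    intro C z
    unfold mm
    congr 1; ext g
    have : e (z + ((AddMonoidHom.inl W W').comp f') g) = e z + f g := by
      rw [map_add]; congr 1
      simp [e, f']
    rw [← this]
    rfl
  have hV : ∀ C, MeasurableSet C → VV volume f C =
      (c : ℝ≥0∞) * VV (μ.prod ν) ((AddMonoidHom.inl W W').comp f') (e ⁻¹' C) := by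
    intro C hC
    unfold VV
    rw [hc, lintegral_smul_measure, lintegral_map, ENNReal.smul_def, smul_eq_mul]
    · congr 1
      refine lintegral_congr fun z => ?_
      rw [hmm]
      rfl
    · exact (measurable_const.indicator hC).mul (mm_meas _ C hC).inv
    · exact e.continuous.measurable
  rw [hV _ (KK_meas s), hV _ (KK_meas t), mul_left_comm]
  gcongr
  rw [← hd']
  have hms : ∀ r : ℝ, MeasurableSet (e ⁻¹' (KK r)) := fun r =>
    e.continuous.measurable (KK_meas r)
  refine growth_prod μ ν f' _ _ (hms s) (hms t) (t / s) ((one_le_div hs).2 hst) ?_ ?_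
  · intro x x0 y hx hx0 p
    have e1 : e (x + (t / s - 1) • x0, (t / s) • y) = e (x, y) + (t / s - 1) • e (x0, y) := by
      rw [← map_smul, ← map_add]
      congr 1
      refine Prod.ext rfl ?_
      simp only [Prod.snd_add, Prod.smul_snd]
      module
    rw [e1]
    have h1 := hx p
    have h2 := hx0 p
    have h3 : 0 ≤ t / s - 1 := by linarith [(one_le_div hs).2 hst]
    simp only [Pi.add_apply, Pi.smul_apply, smul_eq_mul]
    constructor
    · have := mul_nonneg h3 h2.1
      linarith
    · have h4 := mul_le_mul_of_nonneg_left h2.2.le h3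
      have h5 : (t / s - 1) * s = t - s := by field_simp
      linarith
  · intro z
    rw [hmm]
    exact hfin _

def castH (ι : Type*) : (ι → ℤ) →+ (ι → ℝ) where
  toFun z p := (z p : ℝ)
  map_zero' := by ext; simp
  map_add' x y := by ext; simp

def Lam {ι : Type*} [Fintype ι] (L : ι → ℤ) : AddSubgroup (ι → ℤ) where
  carrier := {z | ∑ p, L p * z p = 0}
  zero_mem' := by simp
  add_mem' := by
    intro x y hx hy
    simp only [Set.mem_ofPred_eq, Pi.add_apply, mul_add, Finset.sum_add_distrib] at *
    rw [hx, hy, add_zero]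
  neg_mem' := by
    intro x hx
    simp only [Set.mem_ofPred_eq, Pi.neg_apply, mul_neg, Finset.sum_neg_distrib] at *
    rw [hx, neg_zero]

def fH {ι : Type*} (H : AddSubgroup (ι → ℤ)) : H →+ (ι → ℝ) := (castH ι).comp H.subtype

lemma fH_apply {ι : Type*} (H : AddSubgroup (ι → ℤ)) (g : H) (p : ι) :
    fH H g p = ((g : ι → ℤ) p : ℝ) := rfl

lemma mm_fin {ι : Type*} [Fintype ι] (H : AddSubgroup (ι → ℤ)) (t : ℝ) (x : ι → ℝ) :
    mm (fH H) (KK t) x ≠ ∞ := by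
  classical
  have hfin : {g : H | x + fH H g ∈ KK t}.Finite := by
    have h1 : (Set.Icc (fun p => ⌊- x p⌋) (fun p => ⌈t - x p⌉) : Set (ι → ℤ)).Finite :=
      Set.finite_Icc _ _
    refine Set.Finite.subset (h1.preimage (f := fun g : H => (g : ι → ℤ))
      Subtype.val_injective.injOn) ?_
    intro g hg
    constructor
    · intro p
      have := (hg p).1
      simp only [Pi.add_apply, fH_apply] at this
      have h2 := Int.floor_le (- x p)
      have : ((⌊- x p⌋ : ℤ) : ℝ) ≤ ((g : ι → ℤ) p : ℝ) := by linarith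
      exact_mod_cast this
    · intro p
      have := (hg p).2
      simp only [Pi.add_apply, fH_apply] at this
      have h2 := Int.le_ceil (t - x p)
      have : ((g : ι → ℤ) p : ℝ) ≤ ((⌈t - x p⌉ : ℤ) : ℝ) := by linarith
      exact_mod_cast this
  unfold mm
  rw [tsum_eq_sum (s := hfin.toFinset)]
  · refine (ENNReal.sum_lt_top.2 fun g _ => ?_).ne
    unfold Set.indicator
    split_ifs <;> simp
  · intro g hg
    have : x + fH H g ∉ KK t := by simpa using hg
    simp [this]

lemma sum_fib {α β : Type*} [DecidableEq β] (B : Finset α) (φ : α → β) :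
    ∑ z ∈ B, ((B.filter (fun z' => φ z' = φ z)).card : ℝ≥0∞)⁻¹ ≤ ((B.image φ).card : ℝ≥0∞) := by
  rw [← Finset.sum_fiberwise_of_maps_to (t := B.image φ) (g := φ)
    (fun z hz => Finset.mem_image_of_mem φ hz)]
  calc _ ≤ ∑ v ∈ B.image φ, (1 : ℝ≥0∞) := by
        refine Finset.sum_le_sum fun v hv => ?_
        have : ∀ z ∈ B.filter (fun z => φ z = v),
          ((B.filter (fun z' => φ z' = φ z)).card : ℝ≥0∞)⁻¹ =
            ((B.filter (fun z' => φ z' = v)).card : ℝ≥0∞)⁻¹ := by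
          intro z hz
          rw [(Finset.mem_filter.1 hz).2]
        rw [Finset.sum_congr rfl this, Finset.sum_const, nsmul_eq_mul]
        exact ENNReal.mul_inv_le_one _
    _ = _ := by simp

lemma card_img {ι : Type*} [Fintype ι] [DecidableEq ι] (L : ι → ℤ) (hL : L ≠ 0) (T : ℕ)
    (hT : 1 ≤ T) :
    ((Fintype.piFinset fun _ : ι => Finset.Ico (0 : ℤ) T).image fun z => ∑ p, L p * z p).card
      ≤ T * ∑ p, (L p).natAbs := by
  set lo : ℤ := ∑ p, min 0 (L p * (T - 1)) with hlo
  set hi : ℤ := ∑ p, max 0 (L p * (T - 1)) with hhi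
  have hsub : ((Fintype.piFinset fun _ : ι => Finset.Ico (0 : ℤ) T).image
      fun z => ∑ p, L p * z p) ⊆ Finset.Icc lo hi := by
    intro v hv
    obtain ⟨z, hz, rfl⟩ := Finset.mem_image.1 hv
    rw [Fintype.mem_piFinset] at hz
    rw [Finset.mem_Icc]
    constructor
    · refine Finset.sum_le_sum fun p _ => ?_
      have := Finset.mem_Ico.1 (hz p)
      rcases le_total 0 (L p) with h | h
      · exact (min_le_left _ _).trans (mul_nonneg h this.1)
      · refine (min_le_right _ _).trans ?_
        exact mul_le_mul_of_nonpos_left (by omega) h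
    · refine Finset.sum_le_sum fun p _ => ?_
      have := Finset.mem_Ico.1 (hz p)
      rcases le_total 0 (L p) with h | h
      · refine le_trans ?_ (le_max_right _ _)
        exact mul_le_mul_of_nonneg_left (by omega) h
      · exact le_trans (mul_nonpos_of_nonpos_of_nonneg h this.1) (le_max_left _ _)
  have hdiff : hi - lo = (T - 1) * ∑ p, ((L p).natAbs : ℤ) := by
    rw [hhi, hlo, ← Finset.sum_sub_distrib, Finset.mul_sum]
    refine Finset.sum_congr rfl fun p _ => ?_
    have hT' : (0 : ℤ) ≤ T - 1 := by omega
    rw [Int.natCast_natAbs]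
    rw [max_sub_min_eq_abs, sub_zero, abs_mul, abs_of_nonneg hT', mul_comm]
  have hS : 1 ≤ ∑ p, ((L p).natAbs : ℤ) := by
    obtain ⟨q, hq⟩ := Function.ne_iff.1 hL
    have h1 : ((L q).natAbs : ℤ) ≤ ∑ p, ((L p).natAbs : ℤ) :=
      Finset.single_le_sum (f := fun p => ((L p).natAbs : ℤ)) (fun p _ => by positivity)
        (Finset.mem_univ q)
    have : L q ≠ 0 := hq
    omega
  refine (Finset.card_le_card hsub).trans ?_
  rw [Int.card_Icc]
  zify
  have : hi + 1 - lo = (T - 1) * ∑ p, ((L p).natAbs : ℤ) + 1 := by linarith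
  rw [this]
  have hT' : (0 : ℤ) ≤ T - 1 := by omega
  rw [Int.toNat_of_nonneg (by positivity)]
  push_cast at hS ⊢
  linarith

lemma upper {ι : Type*} [Fintype ι] [DecidableEq ι] (L : ι → ℤ) (hL : L ≠ 0) (T : ℕ)
    (hT : 1 ≤ T) :
    VV volume (fH (Lam L)) (KK (T : ℝ)) ≤ ((T * ∑ p, (L p).natAbs : ℕ) : ℝ≥0∞) := by
  set B := Fintype.piFinset fun _ : ι => Finset.Ico (0 : ℤ) T with hB
  set φ : (ι → ℤ) → ℤ := fun z => ∑ p, L p * z p with hφ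
  let cube : (ι → ℤ) → Set (ι → ℝ) := fun z =>
    Set.pi Set.univ fun p => Set.Ico (z p : ℝ) (z p + 1)
  have hcm : ∀ z, MeasurableSet (cube z) := fun z => MeasurableSet.univ_pi fun _ => measurableSet_Ico
  have hsub : KK (T : ℝ) ⊆ ⋃ z ∈ B, cube z := by
    intro x hx
    simp only [Set.mem_iUnion]
    refine ⟨fun p => ⌊x p⌋, ?_, ?_⟩
    · rw [hB, Fintype.mem_piFinset]
      intro p
      rw [Finset.mem_Ico]
      refine ⟨Int.floor_nonneg.2 (hx p).1, Int.floor_lt.2 ?_⟩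
      exact_mod_cast (hx p).2
    · intro p _
      exact ⟨Int.floor_le _, Int.lt_floor_add_one _⟩
  have hval : ∀ z ∈ B, ∀ x ∈ cube z,
      (mm (fH (Lam L)) (KK (T : ℝ)) x)⁻¹ ≤ ((B.filter (fun z' => φ z' = φ z)).card : ℝ≥0∞)⁻¹ := by
    intro z hz x hx
    rw [ENNReal.inv_le_inv]
    let j : {z' // z' ∈ B.filter (fun z' => φ z' = φ z)} → Lam L := fun z' => ⟨z'.1 - z, by
      have := (Finset.mem_filter.1 z'.2).2
      change ∑ p, L p * (z'.1 - z) p = 0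
      simp only [Pi.sub_apply, mul_sub, Finset.sum_sub_distrib]
      exact sub_eq_zero.2 this⟩
    have hj : Function.Injective j := by
      intro u v huv
      have := congrArg (fun g : Lam L => (g : ι → ℤ)) huv
      simp only [j] at this
      exact Subtype.ext (sub_left_injective this)
    have h1 := ENNReal.tsum_comp_le_tsum_of_injective hj
      (fun g => (KK (T : ℝ)).indicator (fun _ => (1 : ℝ≥0∞)) (x + fH (Lam L) g))
    refine le_trans ?_ h1
    have h2 : ∀ z', (KK (T : ℝ)).indicator (fun _ => (1 : ℝ≥0∞)) (x + fH (Lam L) (j z')) = 1 := by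
      intro z'
      rw [Set.indicator_of_mem]
      intro p
      have hz' := (Finset.mem_filter.1 z'.2).1
      replace hz' := Fintype.mem_piFinset.1 hz'
      have h3 := Finset.mem_Ico.1 (hz' p)
      have h4 := hx p (Set.mem_univ p)
      have h5 : (x + fH (Lam L) (j z')) p = x p + ((z'.1 p : ℝ) - z p) := by
        rw [Pi.add_apply, fH_apply]
        simp [j]
      rw [h5]
      have h6 : (0 : ℝ) ≤ z'.1 p := by exact_mod_cast h3.1
      have h7 : (z'.1 p : ℝ) + 1 ≤ T := by exact_mod_cast h3.2
      constructor
      · linarith [h4.1]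
      · linarith [h4.2]
    simp_rw [h2]
    simp
  calc VV volume (fH (Lam L)) (KK (T : ℝ))
      = ∫⁻ x in KK (T : ℝ), (mm (fH (Lam L)) (KK (T : ℝ)) x)⁻¹ := by
        unfold VV
        rw [← lintegral_indicator (KK_meas _)]
        refine lintegral_congr fun x => ?_
        by_cases hx : x ∈ KK (T : ℝ) <;> simp [hx]
    _ ≤ ∫⁻ x in ⋃ z ∈ B, cube z, (mm (fH (Lam L)) (KK (T : ℝ)) x)⁻¹ :=
        lintegral_mono_set hsub
    _ ≤ ∑ z ∈ B, ∫⁻ x in cube z, (mm (fH (Lam L)) (KK (T : ℝ)) x)⁻¹ := by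
        rw [lintegral_biUnion_finset _ fun z _ => hcm z]
        intro z _ z' _ hne
        rw [Function.onFun, Set.disjoint_left]
        intro x h1 h2
        apply hne
        ext p
        have := h1 p (Set.mem_univ p)
        have h3 := Int.floor_eq_iff.2 (h1 p (Set.mem_univ p))
        have h4 := Int.floor_eq_iff.2 (h2 p (Set.mem_univ p))
        rw [← h3, ← h4]
    _ ≤ ∑ z ∈ B, ((B.filter (fun z' => φ z' = φ z)).card : ℝ≥0∞)⁻¹ := by
        refine Finset.sum_le_sum fun z hz => ?_
        refine (setLIntegral_mono' (hcm z) (hval z hz)).trans ?_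
        rw [setLIntegral_const]
        have : volume (cube z) = 1 := by
          simp only [cube]
          rw [volume_pi_pi]
          simp
        rw [this, mul_one]
    _ ≤ _ := (sum_fib B φ).trans (by exact_mod_cast card_img L hL T hT)

lemma VV_congr {ι : Type*} [Fintype ι] (L : ι → ℤ) (W : Submodule ℝ (ι → ℝ)) (t : ℝ)
    (h : ∀ z ∈ Lam L, ‖castH ι z‖ < t → castH ι z ∈ W) :
    VV volume (fH (Lam L ⊓ W.toAddSubgroup.comap (castH ι))) (KK t)
      = VV volume (fH (Lam L)) (KK t) := by
  unfold VV
  refine lintegral_congr fun x => ?_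
  by_cases hx : x ∈ KK t
  · congr 2
    unfold mm
    have e1 := tsum_subtype ((Lam L ⊓ W.toAddSubgroup.comap (castH ι) : AddSubgroup (ι → ℤ)) :
      Set (ι → ℤ)) (fun g => (KK t).indicator (fun _ => (1 : ℝ≥0∞)) (x + castH ι g))
    have e2 := tsum_subtype ((Lam L : AddSubgroup (ι → ℤ)) : Set (ι → ℤ))
      (fun g => (KK t).indicator (fun _ => (1 : ℝ≥0∞)) (x + castH ι g))
    refine e1.trans (Eq.trans ?_ e2.symm)
    congr 1; ext g
    by_cases hg : g ∈ Lam L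
    · by_cases hW : castH ι g ∈ W
      · simp [Set.indicator, hg, hW]
      · have : x + castH ι g ∉ KK t := by
          intro hK
          refine hW (h g hg ?_)
          have ht : 0 < t := by
            by_contra ht
            by_cases hι : Nonempty ι
            · obtain ⟨p⟩ := hι
              have := hx p
              linarith
            · rw [not_nonempty_iff] at hι
              apply hW
              rw [Subsingleton.elim (castH ι g) 0]
              exact W.zero_mem
          rw [pi_norm_lt_iff ht]
          intro p
          have h1 := hx p
          have h2 := hK p
          rw [Pi.add_apply] at h2
          rw [Real.norm_eq_abs, abs_lt]
          constructor <;> linarith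
        have key : ∀ S : Set (ι → ℤ), S.indicator
            (fun g => (KK t).indicator (fun _ => (1 : ℝ≥0∞)) (x + castH ι g)) g = 0 := by
          intro S
          rw [Set.indicator_apply_eq_zero]
          intro _
          exact Set.indicator_of_notMem this _
        rw [key, key]
    · simp [Set.indicator, hg]
  · simp [hx]

def nn {ι : Type*} [Fintype ι] (z : ι → ℤ) : ℕ := Finset.univ.sup fun p => (z p).natAbs

lemma nn_norm {ι : Type*} [Fintype ι] (z : ι → ℤ) : ‖castH ι z‖ = (nn z : ℝ) := by
  apply le_antisymm
  · rw [pi_norm_le_iff_of_nonneg (by positivity)]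
    intro p
    have h1 : (z p).natAbs ≤ nn z := Finset.le_sup (f := fun p => (z p).natAbs) (Finset.mem_univ p)
    have h2 : ‖castH ι z p‖ = ((z p).natAbs : ℝ) := by
      change ‖((z p : ℤ) : ℝ)‖ = _
      rw [Real.norm_eq_abs, Nat.cast_natAbs, Int.cast_abs]
    rw [h2]
    exact_mod_cast h1
  · have h0 : nn z ≤ ⌊‖castH ι z‖⌋₊ := by
      refine Finset.sup_le fun p _ => Nat.le_floor ?_
      refine le_trans (le_of_eq ?_) (norm_le_pi_norm (castH ι z) p)
      change _ = ‖((z p : ℤ) : ℝ)‖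
      rw [Real.norm_eq_abs, Nat.cast_natAbs, Int.cast_abs]
    calc (nn z : ℝ) ≤ (⌊‖castH ι z‖⌋₊ : ℝ) := by exact_mod_cast h0
      _ ≤ _ := Nat.floor_le (norm_nonneg _)

lemma pick_exists {ι : Type*} [Fintype ι] (L : ι → ℤ) (W : Submodule ℝ (ι → ℝ)) :
    ∃ z : ι → ℤ, (∃ z ∈ Lam L, castH ι z ∉ W) → z ∈ Lam L ∧ castH ι z ∉ W ∧
      ∀ z' ∈ Lam L, castH ι z' ∉ W → nn z ≤ nn z' := by
  by_cases h : ∃ z ∈ Lam L, castH ι z ∉ W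
  · obtain ⟨z0, h0, h0'⟩ := h
    obtain ⟨z, hz, hmin⟩ := (measure (nn (ι := ι))).wf.has_min
      {z | z ∈ Lam L ∧ castH ι z ∉ W} ⟨z0, h0, h0'⟩
    exact ⟨z, fun _ => ⟨hz.1, hz.2, fun z' h1 h2 => not_lt.1 (hmin z' ⟨h1, h2⟩)⟩⟩
  · exact ⟨0, fun h' => absurd h' h⟩

noncomputable def pick {ι : Type*} [Fintype ι] (L : ι → ℤ) (W : Submodule ℝ (ι → ℝ)) : ι → ℤ :=
  (pick_exists L W).choose

noncomputable def Wseq {ι : Type*} [Fintype ι] (L : ι → ℤ) : ℕ → Submodule ℝ (ι → ℝ)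
  | 0 => ⊥
  | k + 1 => Wseq L k ⊔ Submodule.span ℝ {castH ι (pick L (Wseq L k))}

lemma exists_out {ι : Type*} [Fintype ι] [DecidableEq ι] (L : ι → ℤ) (hL : L ≠ 0)
    (U : Submodule ℝ (ι → ℝ)) (hU : Module.finrank ℝ U + 1 < Fintype.card ι) :
    ∃ z ∈ Lam L, castH ι z ∉ U := by
  by_contra hcon
  push Not at hcon
  obtain ⟨q, hq⟩ := Function.ne_iff.1 hL
  have hq : L q ≠ 0 := hq
  have htop : U ⊔ Submodule.span ℝ {Pi.single q (1 : ℝ)} = ⊤ := by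
    rw [eq_top_iff, ← (Pi.basisFun ℝ ι).span_eq, Submodule.span_le]
    rintro _ ⟨p, rfl⟩
    rw [Pi.basisFun_apply]
    set M := U ⊔ Submodule.span ℝ {Pi.single q (1 : ℝ)} with hM
    have hqM : Pi.single q (1 : ℝ) ∈ M :=
      Submodule.mem_sup_right (Submodule.mem_span_singleton_self _)
    have hz : (Pi.single p (L q) - Pi.single q (L p) : ι → ℤ) ∈ Lam L := by
      change ∑ r, L r * (Pi.single p (L q) - Pi.single q (L p) : ι → ℤ) r = 0
      simp only [Pi.sub_apply, mul_sub, Finset.sum_sub_distrib]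
      simp [Pi.single_apply, mul_comm]
    have h1 : castH ι _ ∈ M := Submodule.mem_sup_left (hcon _ hz)
    have h2 : castH ι (Pi.single p (L q) - Pi.single q (L p) : ι → ℤ) =
        (L q : ℝ) • Pi.single p (1 : ℝ) - (L p : ℝ) • Pi.single q (1 : ℝ) := by
      ext r
      change (((Pi.single p (L q) - Pi.single q (L p) : ι → ℤ) r : ℤ) : ℝ) = _
      simp only [Pi.sub_apply, Pi.single_apply, Pi.smul_apply, smul_eq_mul]
      push_cast
      split_ifs <;> simp
    rw [h2] at h1
    have h3 := M.add_mem h1 (M.smul_mem (L p : ℝ) hqM)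
    rw [sub_add_cancel] at h3
    have hq' : (L q : ℝ) ≠ 0 := by exact_mod_cast hq
    exact (M.smul_mem_iff hq').1 h3
  have h1 := Submodule.finrank_add_le_finrank_add_finrank U
    (Submodule.span ℝ {Pi.single q (1 : ℝ)})
  rw [htop, finrank_top, Module.finrank_fintype_fun_eq_card] at h1
  have h2 := finrank_span_le_card (R := ℝ) ({Pi.single q (1 : ℝ)} : Set (ι → ℝ))
  simp at h2
  omega

section
variable {ι : Type*} [Fintype ι] [DecidableEq ι] (L : ι → ℤ)

lemma pick_spec {ι : Type*} [Fintype ι] (L : ι → ℤ) (W : Submodule ℝ (ι → ℝ)) (h : ∃ z ∈ Lam L, castH ι z ∉ W) :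
    pick L W ∈ Lam L ∧ castH ι (pick L W) ∉ W ∧
      ∀ z' ∈ Lam L, castH ι z' ∉ W → nn (pick L W) ≤ nn z' :=
  (pick_exists L W).choose_spec h

lemma W_rank (hL : L ≠ 0) (k : ℕ) (hk : k + 1 ≤ Fintype.card ι) :
    Module.finrank ℝ (Wseq L k) = k := by
  induction k with
  | zero => exact finrank_bot ℝ (ι → ℝ)
  | succ k ih =>
    have ih := ih (by omega)
    have hs := pick_spec L (Wseq L k) (exists_out L hL _ (by omega))
    have hlt : Wseq L k < Wseq L (k + 1) := by
      refine lt_of_le_of_ne le_sup_left fun heq => hs.2.1 ?_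
      refine heq ▸ (?_ : castH ι (pick L (Wseq L k)) ∈ Wseq L (k + 1))
      exact Submodule.mem_sup_right (Submodule.mem_span_singleton_self _)
    have h1 := Submodule.finrank_lt_finrank_of_lt hlt
    have h2 := Submodule.finrank_add_le_finrank_add_finrank (Wseq L k)
      (Submodule.span ℝ {castH ι (pick L (Wseq L k))})
    have h3 := finrank_span_le_card (R := ℝ) ({castH ι (pick L (Wseq L k))} : Set (ι → ℝ))
    simp only [Set.toFinset_singleton, Finset.card_singleton] at h3
    change Module.finrank ℝ (Wseq L (k + 1)) ≤ _ at h2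
    omega

lemma W_spec (hL : L ≠ 0) (k : ℕ) (hk : k + 1 < Fintype.card ι) :
    pick L (Wseq L k) ∈ Lam L ∧ castH ι (pick L (Wseq L k)) ∉ Wseq L k ∧
      ∀ z' ∈ Lam L, castH ι z' ∉ Wseq L k → nn (pick L (Wseq L k)) ≤ nn z' :=
  pick_spec L _ (exists_out L hL _ (by rw [W_rank L hL k hk.le]; exact hk))

lemma lam_pos (hL : L ≠ 0) (k : ℕ) (hk : k + 1 < Fintype.card ι) :
    0 < nn (pick L (Wseq L k)) := by
  have h := (W_spec L hL k hk).2.1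
  by_contra h0
  have h1 := nn_norm (pick L (Wseq L k))
  have h2 : nn (pick L (Wseq L k)) = 0 := by omega
  rw [h2, Nat.cast_zero, norm_eq_zero] at h1
  rw [h1] at h
  exact h (Submodule.zero_mem _)

lemma chain (hL : L ≠ 0) (k : ℕ) (hk : k + 1 < Fintype.card ι) :
    (((nn (pick L (Wseq L k))) ^ (Fintype.card ι - 1 - k) *
      ∏ i ∈ Finset.range (k + 1), nn (pick L (Wseq L i)) : ℕ) : ℝ≥0∞) ≤
      VV volume (fH (Lam L)) (KK (nn (pick L (Wseq L k)) : ℝ)) := by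
  have hin : ∀ k, k + 1 < Fintype.card ι → ∀ z ∈ Lam L,
      ‖castH ι z‖ < (nn (pick L (Wseq L k)) : ℝ) → castH ι z ∈ Wseq L k := by
    intro k hk z hz hlt
    by_contra hcon
    have := (W_spec L hL k hk).2.2 z hz hcon
    rw [nn_norm] at hlt
    have : nn z < nn (pick L (Wseq L k)) := by exact_mod_cast hlt
    omega
  induction k with
  | zero =>
    rw [← VV_congr L (Wseq L 0) _ (hin 0 hk)]
    set t := nn (pick L (Wseq L 0)) with ht
    have hmm : ∀ x ∈ (KK (t : ℝ) : Set (ι → ℝ)),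
        mm (fH (Lam L ⊓ (Wseq L 0).toAddSubgroup.comap (castH ι))) (KK (t : ℝ)) x = 1 := by
      intro x hx
      unfold mm
      rw [tsum_eq_single 0]
      · simp [hx]
      · intro g hg
        exfalso
        apply hg
        have h1 : castH ι (g : ι → ℤ) = 0 := by simpa [Wseq] using g.2.2
        ext p
        have h2 : (((g : ι → ℤ) p : ℤ) : ℝ) = 0 := congrFun h1 p
        exact_mod_cast h2
    have : VV volume (fH (Lam L ⊓ (Wseq L 0).toAddSubgroup.comap (castH ι))) (KK (t : ℝ))
        = volume (KK (t : ℝ) : Set (ι → ℝ)) := by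
      unfold VV
      rw [← lintegral_indicator_one (KK_meas _)]
      refine lintegral_congr fun x => ?_
      by_cases hx : x ∈ (KK (t : ℝ) : Set (ι → ℝ))
      · simp [hx, hmm x hx]
      · simp [hx]
    rw [this, KK_eq, volume_pi_pi]
    simp only [Real.volume_Ico, sub_zero, Finset.prod_const, Finset.card_univ]
    rw [ENNReal.ofReal_natCast, Finset.prod_range_one, ← ht]
    push_cast
    rw [← pow_succ]
    apply le_of_eq
    congr 1
    omega
  | succ k ih =>
    have ih := ih (by omega)
    have hk' : k + 1 < Fintype.card ι := by omega
    set s := nn (pick L (Wseq L k)) with hs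
    set t := nn (pick L (Wseq L (k + 1))) with ht
    have hspos : 0 < s := lam_pos L hL k hk'
    have hWW : Wseq L k ≤ Wseq L (k + 1) := le_sup_left
    have hst : s ≤ t := by
      have h1 := W_spec L hL (k + 1) hk
      exact (W_spec L hL k hk').2.2 _ h1.1 fun h => h1.2.1 (hWW h)
    rw [← VV_congr L (Wseq L (k + 1)) _ (hin (k + 1) hk)]
    rw [← VV_congr L (Wseq L (k + 1)) _ (fun z hz h => hWW (hin k hk' z hz h))] at ih
    have hg := growth (Wseq L (k + 1))
      (fH (Lam L ⊓ (Wseq L (k + 1)).toAddSubgroup.comap (castH ι))) (fun g => g.2.2)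
      (s : ℝ) (t : ℝ) (by exact_mod_cast hspos) (by exact_mod_cast hst)
      (Fintype.card ι - 1 - k) (by rw [W_rank L hL (k + 1) hk.le]; omega)
      (fun z => mm_fin _ _ _)
    refine le_trans ?_ (le_trans (mul_le_mul_right ih _) hg)
    apply le_of_eq
    rw [← ENNReal.ofReal_pow (by positivity), ← ENNReal.ofReal_natCast, ← ENNReal.ofReal_natCast,
      ← ENNReal.ofReal_mul (by positivity)]
    congr 1
    rw [Finset.prod_range_succ _ (k + 1), ← ht]
    obtain ⟨d, hd⟩ : ∃ d, Fintype.card ι - 1 - k = d + 1 := ⟨Fintype.card ι - 1 - k - 1, by omega⟩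
    have hd2 : Fintype.card ι - 1 - (k + 1) = d := by omega
    rw [hd, hd2]
    push_cast
    have : (s : ℝ) ≠ 0 := by exact_mod_cast hspos.ne'
    rw [div_pow]
    field_simp
    ring

end

theorem siegel {ι : Type*} [Fintype ι] [DecidableEq ι] (L : ι → ℤ) (hL : L ≠ 0) (n : ℕ)
    (hn : n + 1 = Fintype.card ι) (hn1 : 1 ≤ n) :
    ∃ x : Fin n → (ι → ℤ), (∀ i, ∑ p, L p * x i p = 0) ∧
      LinearIndependent ℝ (fun i => castH ι (x i)) ∧
      ∏ i, nn (x i) ≤ ∑ p, (L p).natAbs := by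
  refine ⟨fun i => pick L (Wseq L i), fun i => (W_spec L hL i (by omega)).1, ?_, ?_⟩
  · rw [linearIndependent_iff_card_le_finrank_span]
    have hle : ∀ k ≤ n, Wseq L k ≤
        Submodule.span ℝ (Set.range fun i : Fin n => castH ι (pick L (Wseq L i))) := by
      intro k
      induction k with
      | zero => intro _; exact bot_le
      | succ k ih =>
        intro hk
        refine sup_le (ih (by omega)) ?_
        rw [Submodule.span_le, Set.singleton_subset_iff]
        exact Submodule.subset_span ⟨⟨k, hk⟩, rfl⟩
    have h1 := Submodule.finrank_mono (hle n le_rfl)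
    rw [W_rank L hL n hn.le] at h1
    simpa [Set.finrank] using h1
  · obtain ⟨m, rfl⟩ : ∃ m, n = m + 1 := ⟨n - 1, by omega⟩
    have h1 := chain L hL m (by omega)
    have hpos := lam_pos L hL m (by omega)
    have h2 := h1.trans (upper L hL _ hpos)
    have h3 : Fintype.card ι - 1 - m = 1 := by omega
    rw [h3, pow_one] at h2
    have h4 := Nat.le_of_mul_le_mul_left (Nat.cast_le.1 h2) hpos
    rwa [Finset.prod_range] at h4

lemma dpsi_eq (ψ : ℕ → ℤ) (n M : ℕ) (hM : M ≠ 0) (h : n ∣ M) :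
    dpsi ψ (n : ℤ) = ∑ p ∈ M.primeFactors, (((n / p) * n.factorization p : ℕ) : ℤ) * ψ p := by
  unfold dpsi
  rw [Int.natAbs_natCast]
  refine (Finset.sum_subset (Nat.primeFactors_mono h hM) ?_).trans ?_
  · intro p _ hp
    have : n.factorization p = 0 := by
      rw [← Nat.support_factorization] at hp
      exact Finsupp.notMem_support_iff.1 hp
    simp [this]
  · refine Finset.sum_congr rfl fun p _ => ?_
    push_cast
    rfl

lemma l1_bound (n M : ℕ) (hM : M ≠ 0) (h : n ∣ M) :
    ((∑ p ∈ M.primeFactors, (n / p) * n.factorization p : ℕ) : ℝ) ≤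
      n * Real.log n / (2 * Real.log 2) := by
  have hl2 : 0 < Real.log 2 := Real.log_pos (by norm_num)
  rw [Real.log_nat_eq_sum_factorization n, Finsupp.sum_of_support_subset _
    (s := M.primeFactors) (by rw [Nat.support_factorization]; exact Nat.primeFactors_mono h hM) _
    (by simp)]
  push_cast
  rw [Finset.mul_sum, Finset.sum_div]
  refine Finset.sum_le_sum fun p hp => ?_
  have hp := Nat.prime_of_mem_primeFactors hp
  have hp2 : (2 : ℝ) ≤ p := by exact_mod_cast hp.two_le
  have h1 : ((n / p : ℕ) : ℝ) ≤ (n : ℝ) / p := Nat.cast_div_le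
  have hlog : Real.log 2 ≤ Real.log p := Real.log_le_log (by norm_num) hp2
  have h2 : 2 * Real.log 2 ≤ p * Real.log p := by
    apply mul_le_mul hp2 hlog hl2.le (by linarith)
  rw [le_div_iff₀ (by positivity)]
  have hv : (0 : ℝ) ≤ n.factorization p := by positivity
  calc ((n / p : ℕ) : ℝ) * n.factorization p * (2 * Real.log 2)
      ≤ ((n : ℝ) / p) * n.factorization p * (p * Real.log p) := by gcongr
    _ = n * (n.factorization p * Real.log p) := by
      field_simp

lemma two_primes (a b : ℕ) (ha : 0 < a) (hb : 0 < b)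
    (hab : Nat.Coprime a b) (hc : 2 < a + b) : 2 ≤ (a * b * (a + b)).primeFactors.card := by
  have hM : a * b * (a + b) ≠ 0 := by positivity
  obtain ⟨p, hp, hpc⟩ := Nat.exists_prime_and_dvd (n := a + b) (by omega)
  have hpa : ¬ p ∣ a := fun h =>
    Nat.not_coprime_of_dvd_of_dvd hp.one_lt h ((Nat.dvd_add_right h).1 hpc) hab
  have hpb : ¬ p ∣ b := fun h =>
    Nat.not_coprime_of_dvd_of_dvd hp.one_lt ((Nat.dvd_add_left h).1 hpc) h hab
  have hab1 : a * b ≠ 1 := by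
    intro h
    have h1 := Nat.eq_one_of_mul_eq_one_right h
    have h2 := Nat.eq_one_of_mul_eq_one_left h
    omega
  obtain ⟨q, hq, hqd⟩ := Nat.exists_prime_and_dvd hab1
  have hne : p ≠ q := by
    rintro rfl
    rcases hp.dvd_mul.1 hqd with h | h
    · exact hpa h
    · exact hpb h
  have hsub : ({p, q} : Finset ℕ) ⊆ (a * b * (a + b)).primeFactors := by
    intro r hr
    rw [Nat.mem_primeFactors]
    rw [Finset.mem_insert, Finset.mem_singleton] at hr
    rcases hr with rfl | rfl
    · exact ⟨hp, Dvd.dvd.mul_left hpc _, hM⟩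
    · exact ⟨hq, Dvd.dvd.mul_right hqd _, hM⟩
  have := Finset.card_le_card hsub
  rwa [Finset.card_pair hne] at this

/-- Existence of arithmetic derivatives of controlled size. -/
theorem existence_controlled_size (a b : ℕ) (ha : 0 < a) (hb : 0 < b)
    (hab : Nat.Coprime a b) (hc : 2 < a + b) :
    1 ≤ (a * b * (a + b)).primeFactors.card - 1 ∧
    ∃ ψs : Fin ((a * b * (a + b)).primeFactors.card - 1) → (ℕ → ℤ),
      (∀ i, MemT a b (ψs i)) ∧ LinearIndependent ℤ ψs ∧
      ∏ i, dNorm (ψs i) ≤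
        ((a * b * (a + b)).primeFactors.card : ℝ) / (2 * Real.log 2) *
          ((a + b : ℕ) : ℝ) * Real.log ((a + b : ℕ) : ℝ) := by
  have h2 := two_primes a b ha hb hab hc
  refine ⟨by omega, ?_⟩
  have hM : a * b * (a + b) ≠ 0 := by positivity
  have hda : a ∣ a * b * (a + b) := Dvd.intro _ (mul_assoc a b _).symm
  have hdb : b ∣ a * b * (a + b) := Dvd.dvd.mul_right (Dvd.intro_left _ rfl) _
  have hdc : a + b ∣ a * b * (a + b) := Dvd.intro_left _ rfl
  set M := a * b * (a + b) with hMdef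
  let D : ℕ → ℕ → ℕ := fun n p => (n / p) * n.factorization p
  let L : M.primeFactors → ℤ := fun p => (D (a + b) p : ℤ) - D a p - D b p
  have hL : L ≠ 0 := by
    obtain ⟨p, hp, hpc⟩ := Nat.exists_prime_and_dvd (n := a + b) (by omega)
    have hpa : ¬ p ∣ a := fun h =>
      Nat.not_coprime_of_dvd_of_dvd hp.one_lt h ((Nat.dvd_add_right h).1 hpc) hab
    have hpb : ¬ p ∣ b := fun h =>
      Nat.not_coprime_of_dvd_of_dvd hp.one_lt ((Nat.dvd_add_left h).1 hpc) h hab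
    intro h0
    have h1 := congrFun h0 ⟨p, Nat.mem_primeFactors.2 ⟨hp, hpc.trans hdc, hM⟩⟩
    have e1 : D a p = 0 := by simp [D, Nat.factorization_eq_zero_of_not_dvd hpa]
    have e2 : D b p = 0 := by simp [D, Nat.factorization_eq_zero_of_not_dvd hpb]
    have e3 : 0 < D (a + b) p := by
      refine Nat.mul_pos (Nat.div_pos (Nat.le_of_dvd (by omega) hpc) hp.pos) ?_
      exact hp.factorization_pos_of_dvd (by omega) hpc
    have h2 : (D (a + b) p : ℤ) - D a p - D b p = 0 := h1
    omega
  obtain ⟨x, hx0, hxli, hxp⟩ := siegel L hL (M.primeFactors.card - 1)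
    (by rw [Fintype.card_coe]; omega) (by omega)
  let ψs : Fin (M.primeFactors.card - 1) → (ℕ → ℤ) := fun i p =>
    if h : p ∈ M.primeFactors then x i ⟨p, h⟩ else 0
  have hψ : ∀ i (p : M.primeFactors), ψs i p = x i p := fun i p => by
    simp only [ψs]
    rw [dif_pos p.2]
  have hψ0 : ∀ i p, p ∉ M.primeFactors → ψs i p = 0 := fun i p hp => by
    simp only [ψs]
    rw [dif_neg hp]
  have hbd : ∀ i p, |ψs i p| ≤ (nn (x i) : ℤ) := by
    intro i p
    by_cases hp : p ∈ M.primeFactors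
    · have := hψ i ⟨p, hp⟩
      simp only at this
      rw [this, Int.abs_eq_natAbs]
      have h3 : (x i ⟨p, hp⟩).natAbs ≤ nn (x i) :=
        Finset.le_sup (f := fun p => (x i p).natAbs) (Finset.mem_univ _)
      exact_mod_cast h3
    · rw [hψ0 i p hp]
      simp
  refine ⟨ψs, ?_, ?_, ?_⟩
  · intro i
    refine ⟨⟨?_, _, hbd i⟩, ?_, ?_⟩
    · intro p hp
      exact hψ0 i p fun h => hp (Nat.prime_of_mem_primeFactors h)
    · intro p _ hp
      exact hψ0 i p fun h => hp (Nat.dvd_of_mem_primeFactors h)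
    · rw [dpsi_eq _ a M hM hda, dpsi_eq _ b M hM hdb, ← Nat.cast_add, dpsi_eq _ (a + b) M hM hdc]
      rw [← Finset.sum_add_distrib, ← sub_eq_zero, ← Finset.sum_sub_distrib, ← hx0 i,
        ← Finset.sum_coe_sort]
      refine Finset.sum_congr rfl fun p _ => ?_
      rw [hψ]
      simp only [L, D]
      ring
  · let R : (ℕ → ℤ) →ₗ[ℤ] (M.primeFactors → ℝ) :=
      AddMonoidHom.toIntLinearMap
        { toFun := fun ψ p => (ψ p : ℝ)
          map_zero' := by ext; simp
          map_add' := fun u v => by ext; simp }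
    refine LinearIndependent.of_comp R ?_
    have h1 : (R ∘ ψs) = fun i => castH _ (x i) := by
      ext i p
      change ((ψs i p : ℤ) : ℝ) = ((x i p : ℤ) : ℝ)
      rw [hψ]
    rw [h1]
    refine hxli.restrict_scalars ?_
    intro u v huv
    simpa using huv
  · have hl2 : 0 < Real.log 2 := Real.log_pos (by norm_num)
    have hN : ∀ i, dNorm (ψs i) ≤ (nn (x i) : ℝ) := by
      intro i
      refine ciSup_le fun p => ?_
      exact_mod_cast hbd i p
    have hN0 : ∀ i, 0 ≤ dNorm (ψs i) := fun i => Real.iSup_nonneg fun p => abs_nonneg _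
    have hLs : ∑ p, (L p).natAbs ≤ (∑ p ∈ M.primeFactors, D (a + b) p) +
        (∑ p ∈ M.primeFactors, D a p) + ∑ p ∈ M.primeFactors, D b p := by
      rw [← Finset.sum_add_distrib, ← Finset.sum_add_distrib,
        ← Finset.sum_coe_sort M.primeFactors]
      refine Finset.sum_le_sum fun p _ => ?_
      simp only [L]
      omega
    have b1 := l1_bound a M hM hda
    have b2 := l1_bound b M hM hdb
    have b3 := l1_bound (a + b) M hM hdc
    have hac : Real.log a ≤ Real.log ((a + b : ℕ) : ℝ) :=
      Real.log_le_log (by exact_mod_cast ha) (by exact_mod_cast Nat.le_add_right a b)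
    have hbc : Real.log b ≤ Real.log ((a + b : ℕ) : ℝ) :=
      Real.log_le_log (by exact_mod_cast hb) (by exact_mod_cast Nat.le_add_left b a)
    have hlc : 0 ≤ Real.log ((a + b : ℕ) : ℝ) := Real.log_natCast_nonneg _
    set lc := Real.log ((a + b : ℕ) : ℝ) with hlcdef
    calc ∏ i, dNorm (ψs i) ≤ ∏ i, (nn (x i) : ℝ) :=
          Finset.prod_le_prod (fun i _ => hN0 i) fun i _ => hN i
      _ ≤ ((∑ p ∈ M.primeFactors, D (a + b) p : ℕ) : ℝ) +
          ((∑ p ∈ M.primeFactors, D a p : ℕ) : ℝ) + ((∑ p ∈ M.primeFactors, D b p : ℕ) : ℝ) := by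
          exact_mod_cast hxp.trans hLs
      _ ≤ ((a + b : ℕ) : ℝ) * lc / (2 * Real.log 2) + a * Real.log a / (2 * Real.log 2)
          + b * Real.log b / (2 * Real.log 2) := by
          linarith
      _ ≤ ((a + b : ℕ) : ℝ) * lc / (2 * Real.log 2) + a * lc / (2 * Real.log 2)
          + b * lc / (2 * Real.log 2) := by gcongr
      _ = 2 / (2 * Real.log 2) * ((a + b : ℕ) : ℝ) * lc := by
          push_cast
          field_simp
          ring
      _ ≤ _ := by
          have : (2 : ℝ) ≤ M.primeFactors.card := by exact_mod_cast h2
          gcongr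
end

section
/- Existence of a small derivative: for every ε > 0, for all but finitely many triples (a,b,c) of pairwise coprime positive integers with c > 2 and a + b = c, there is a nonzero derivation ψ ∈ 𝒯(a,b) with ‖ψ‖ < c^{1/r + ε}, where r = ω(abc) − 1. -/
open Finset

lemma aux_fact (n c p : ℕ) (hn : 0 < n) (hnc : n ≤ c) :
    n.factorization p ≤ Nat.log 2 c := by
  by_cases hp : p.Prime
  · apply Nat.le_log_of_pow_le one_lt_two
    calc 2 ^ n.factorization p ≤ p ^ n.factorization p := Nat.pow_le_pow_left hp.two_le _
      _ ≤ n := Nat.le_of_dvd hn (Nat.ordProj_dvd n p)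
      _ ≤ c := hnc
  · simp [Nat.factorization_eq_zero_of_not_prime n hp]

lemma aux_card (n c : ℕ) (hn : 0 < n) (hnc : n ≤ c) :
    n.primeFactors.card ≤ Nat.log 2 c := by
  apply Nat.le_log_of_pow_le one_lt_two
  calc 2 ^ n.primeFactors.card ≤ ∏ p ∈ n.primeFactors, p :=
        Finset.pow_card_le_prod _ _ _ fun p hp => (Nat.prime_of_mem_primeFactors hp).two_le
    _ ≤ n := Nat.le_of_dvd hn (Nat.prod_primeFactors_dvd n)
    _ ≤ c := hnc

lemma aux_dpsi (ψ : ℕ → ℤ) (n : ℕ) (S : Finset ℕ) (h : n.primeFactors ⊆ S) :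
    dpsi ψ (n : ℤ) = ∑ p ∈ S, ((n : ℤ) / (p : ℤ)) * (n.factorization p : ℤ) * ψ p := by
  unfold dpsi
  rw [Int.natAbs_natCast]
  apply Finset.sum_subset h
  intro p _ hp
  rw [← Nat.support_factorization, Finsupp.notMem_support_iff] at hp
  simp [hp]

lemma aux_coef (n c p : ℕ) (hn : 0 < n) (hnc : n ≤ c) :
    0 ≤ ((n : ℤ) / (p : ℤ)) * (n.factorization p : ℤ) ∧
    ((n : ℤ) / (p : ℤ)) * (n.factorization p : ℤ) ≤ (c : ℤ) * (Nat.log 2 c : ℤ) := by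
  have h1 : n / p * n.factorization p ≤ c * Nat.log 2 c :=
    Nat.mul_le_mul ((Nat.div_le_self n p).trans hnc) (aux_fact n c p hn hnc)
  refine ⟨by positivity, by exact_mod_cast h1⟩

attribute [local instance] Matrix.seminormedAddCommGroup

lemma aux_main (a b c : ℕ) (ha : 0 < a) (hb : 0 < b) (hc : 2 < c) (habc : a + b = c)
    (h2 : Nat.Coprime a c) (h3 : Nat.Coprime b c) :
    2 ≤ (a * b * c).primeFactors.card ∧
    ∃ ψ : ℕ → ℤ, MemT a b ψ ∧ ψ ≠ 0 ∧
      dNorm ψ ≤ (9 * (c : ℝ) * (Nat.log 2 c : ℝ) ^ 2) ^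
          (1 / (((a * b * c).primeFactors.card : ℝ) - 1)) := by
  classical
  set S := (a * b * c).primeFactors with hS
  set L := Nat.log 2 c with hL
  have hc0 : 0 < c := by omega
  have h0 : a * b * c ≠ 0 := by positivity
  have hSa : a.primeFactors ⊆ S := Nat.primeFactors_mono ⟨b * c, by ring⟩ h0
  have hSb : b.primeFactors ⊆ S := Nat.primeFactors_mono ⟨a * c, by ring⟩ h0
  have hSc : c.primeFactors ⊆ S := Nat.primeFactors_mono ⟨a * b, by ring⟩ h0
  have hL1 : 1 ≤ L := Nat.le_log_of_pow_le one_lt_two (by omega)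
  have key : ∀ n : ℕ, 2 ≤ n → n.Coprime c → n.primeFactors ⊆ S → 2 ≤ S.card := by
    intro n hn hcop hsub
    have e1 : n.minFac ∈ S := hsub (by
      simp only [Nat.mem_primeFactors]
      exact ⟨Nat.minFac_prime (by omega), Nat.minFac_dvd n, by omega⟩)
    have e2 : c.minFac ∈ S := hSc (by
      simp only [Nat.mem_primeFactors]
      exact ⟨Nat.minFac_prime (by omega), Nat.minFac_dvd c, by omega⟩)
    have hne : n.minFac ≠ c.minFac := by
      intro h
      exact Nat.not_coprime_of_dvd_of_dvd (Nat.minFac_prime (by omega : n ≠ 1)).one_lt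
        (Nat.minFac_dvd n) (h ▸ Nat.minFac_dvd c) hcop
    exact Finset.one_lt_card.mpr ⟨_, e1, _, e2, hne⟩
  have hcard : 2 ≤ S.card := by
    rcases (by omega : 2 ≤ a ∨ 2 ≤ b) with h | h
    · exact key a h h2 hSa
    · exact key b h h3 hSb
  refine ⟨hcard, ?_⟩
  have hcardle : S.card ≤ 3 * L := by
    have : S = a.primeFactors ∪ b.primeFactors ∪ c.primeFactors := by
      rw [hS, Nat.primeFactors_mul (by positivity) (by positivity),
        Nat.primeFactors_mul (by positivity) (by positivity)]
    rw [this]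
    have e1 := aux_card a c ha (by omega)
    have e2 := aux_card b c hb (by omega)
    have e3 := aux_card c c hc0 le_rfl
    have e4 := Finset.card_union_le (a.primeFactors ∪ b.primeFactors) c.primeFactors
    have e5 := Finset.card_union_le a.primeFactors b.primeFactors
    omega
  let co : ℕ → ℕ → ℤ := fun n p => ((n : ℤ) / (p : ℤ)) * (n.factorization p : ℤ)
  let A : Matrix (Fin 1) S ℤ := fun _ p => co c p - co a p - co b p
  obtain ⟨t, ht0, hAt, htn⟩ := Int.Matrix.exists_ne_zero_int_vec_norm_le A
    (by simp; omega) (by simp)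
  have hA : ‖A‖ ≤ 3 * c * L := by
    rw [Matrix.norm_le_iff (by positivity)]
    intro i j
    have e1 := aux_coef a c j ha (by omega)
    have e2 := aux_coef b c j hb (by omega)
    have e3 := aux_coef c c j hc0 le_rfl
    rw [Int.norm_eq_abs]
    have : |A i j| ≤ 3 * c * L := by
      simp only [A, co]
      rw [abs_le]
      constructor <;> nlinarith
    exact_mod_cast this
  simp only [Fintype.card_coe, Fintype.card_fin, Nat.cast_one] at htn
  have hSr : (2 : ℝ) ≤ S.card := by exact_mod_cast hcard
  have hLr : (1 : ℝ) ≤ L := by exact_mod_cast hL1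
  have hcr : (2 : ℝ) < c := by exact_mod_cast hc
  have hcl : (S.card : ℝ) ≤ 3 * L := by exact_mod_cast hcardle
  have htn' : ‖t‖ ≤ (9 * (c : ℝ) * (L : ℝ) ^ 2) ^ (1 / ((S.card : ℝ) - 1)) := by
    refine htn.trans (Real.rpow_le_rpow (by positivity) ?_ (by
      apply div_nonneg <;> linarith))
    have hm : max 1 ‖A‖ ≤ 3 * c * L := max_le (by nlinarith) hA
    calc (S.card : ℝ) * max 1 ‖A‖ ≤ (3 * L) * (3 * c * L) := by
          apply mul_le_mul hcl hm (by positivity) (by positivity)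
      _ = _ := by ring
  let ψ : ℕ → ℤ := fun p => if h : p ∈ S then t ⟨p, h⟩ else 0
  have hψt : ∀ p : S, ψ p = t p := fun p => by simp [ψ]
  have hψb : ∀ p, (|ψ p| : ℝ) ≤ ‖t‖ := by
    intro p
    by_cases h : p ∈ S
    · have := norm_le_pi_norm t ⟨p, h⟩
      rw [Int.norm_eq_abs] at this
      simpa [ψ, h] using this
    · simp [ψ, h]
  refine ⟨ψ, ⟨⟨?_, ?_⟩, ?_, ?_⟩, ?_, ?_⟩
  · intro p hp
    have : p ∉ S := fun h => hp (Nat.prime_of_mem_primeFactors h)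
    simp [ψ, this]
  · refine ⟨⌈‖t‖⌉, fun p => ?_⟩
    have := (hψb p).trans (Int.le_ceil _)
    exact_mod_cast this
  · intro p hp hd
    have : p ∉ S := fun h => hd (habc ▸ Nat.dvd_of_mem_primeFactors h)
    simp [ψ, this]
  · rw [← Nat.cast_add, habc, aux_dpsi ψ c S hSc, aux_dpsi ψ a S hSa, aux_dpsi ψ b S hSb]
    have h := congrFun hAt 0
    simp only [Matrix.mulVec, dotProduct, Pi.zero_apply] at h
    have h' : ∑ p ∈ S, (co c p - co a p - co b p) * ψ p = 0 := by
      rw [← h, ← Finset.sum_coe_sort S]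
      exact Finset.sum_congr rfl fun p _ => by rw [hψt]
    simp only [sub_mul, Finset.sum_sub_distrib] at h'
    simp only [co] at h'
    linarith
  · intro h
    apply ht0
    funext p
    rw [← hψt p, h]; rfl
  · exact (ciSup_le hψb).trans htn'

lemma aux_asym (ε : ℝ) (hε : 0 < ε) :
    ∃ C : ℕ, ∀ c : ℕ, C ≤ c → 9 * (Nat.log 2 c : ℝ) ^ 2 < (c : ℝ) ^ ε := by
  have h := (isLittleO_log_rpow_rpow_atTop (2 : ℝ) hε).def (by norm_num : (0 : ℝ) < 1 / 72)
  have h' := (tendsto_natCast_atTop_atTop (R := ℝ)).eventually h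
  obtain ⟨C, hC⟩ := Filter.eventually_atTop.mp h'
  refine ⟨max C 1, fun c hc => ?_⟩
  have h1 := hC c (le_trans (le_max_left _ _) hc)
  have hc1 : 1 ≤ c := le_trans (le_max_right _ _) hc
  have hcr : (1 : ℝ) ≤ c := by exact_mod_cast hc1
  have hp : 0 < (c : ℝ) ^ ε := by positivity
  have hl : 0 ≤ Real.log c := Real.log_nonneg hcr
  rw [Real.norm_of_nonneg hp.le, Real.norm_of_nonneg (by positivity), Real.rpow_two] at h1
  have h2 : (Nat.log 2 c : ℝ) ≤ 2 * Real.log c := by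
    have := Real.natLog_le_logb c 2
    refine this.trans ?_
    rw [Real.logb, div_le_iff₀ (Real.log_pos (by norm_num))]
    have := Real.log_two_gt_d9
    push_cast
    nlinarith
  have h3 : (Nat.log 2 c : ℝ) ^ 2 ≤ (2 * Real.log c) ^ 2 := by gcongr
  nlinarith

/-- Existence of a small derivative. -/
theorem existence_small_derivative (ε : ℝ) (hε : 0 < ε) :
    {t : ℕ × ℕ × ℕ | 0 < t.1 ∧ 0 < t.2.1 ∧ 2 < t.2.2 ∧ t.1 + t.2.1 = t.2.2 ∧
      Nat.Coprime t.1 t.2.1 ∧ Nat.Coprime t.1 t.2.2 ∧ Nat.Coprime t.2.1 t.2.2 ∧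
      ¬ ∃ ψ : ℕ → ℤ, MemT t.1 t.2.1 ψ ∧ ψ ≠ 0 ∧
        dNorm ψ < (t.2.2 : ℝ) ^
          (1 / (((t.1 * t.2.1 * t.2.2).primeFactors.card : ℝ) - 1) + ε)}.Finite := by
  obtain ⟨C, hC⟩ := aux_asym ε hε
  refine (Set.finite_Iic ((C, C, C) : ℕ × ℕ × ℕ)).subset ?_
  rintro ⟨a, b, c⟩ ⟨ha, hb, hc, habc, _, h2, h3, hno⟩
  simp only at ha hb hc habc h2 h3 hno
  by_contra hnot
  have hCc : C ≤ c := by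
    by_contra hlt
    apply hnot
    simp only [Set.mem_Iic, Prod.mk_le_mk]
    omega
  obtain ⟨hcard, ψ, hT, h0, hn⟩ := aux_main a b c ha hb hc habc h2 h3
  refine hno ⟨ψ, hT, h0, hn.trans_lt ?_⟩
  have hSr : (2 : ℝ) ≤ (a * b * c).primeFactors.card := by exact_mod_cast hcard
  have hL1 : 1 ≤ Nat.log 2 c := Nat.le_log_of_pow_le one_lt_two (by omega)
  have hLr : (1 : ℝ) ≤ Nat.log 2 c := by exact_mod_cast hL1
  have hcr : (2 : ℝ) < c := by exact_mod_cast hc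
  set r : ℝ := ((a * b * c).primeFactors.card : ℝ) - 1 with hr
  have hr1 : 1 ≤ r := by linarith
  have hr2 : 1 / r ≤ 1 := by rw [div_le_one (by linarith)]; exact hr1
  rw [Real.rpow_add (by linarith),
    show 9 * (c : ℝ) * (Nat.log 2 c : ℝ) ^ 2 = c * (9 * (Nat.log 2 c : ℝ) ^ 2) by ring,
    Real.mul_rpow (by positivity) (by positivity)]
  apply mul_lt_mul_of_pos_left _ (by positivity)
  refine lt_of_le_of_lt ?_ (hC c hCc)
  calc (9 * (Nat.log 2 c : ℝ) ^ 2) ^ (1 / r) ≤ (9 * (Nat.log 2 c : ℝ) ^ 2) ^ (1 : ℝ) :=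
        Real.rpow_le_rpow_of_exponent_le (by nlinarith) hr2
    _ = _ := Real.rpow_one _
end

section
/- Let a, b be coprime positive integers with (a,b) ≠ (1,1) and c = a + b. The set 𝒯°(a,b) of derivations ψ ∈ 𝒯(a,b) for which a, b are ψ-dependent is a saturated subgroup of 𝒯(a,b) of rank ω(abc) − 2: there exist ω(abc) − 2 ℤ-linearly independent elements of 𝒯°(a,b), and any ω(abc) − 1 elements of 𝒯°(a,b) are ℤ-linearly dependent. In particular, 𝒯°(a,b) is properly contained in 𝒯(a,b). -/
open Finset

def Dl (n : ℤ) : (ℕ → ℤ) →ₗ[ℤ] ℤ where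
  toFun ψ := dpsi ψ n
  map_add' x y := by
    simp only [dpsi, Pi.add_apply, mul_add, Finset.sum_add_distrib]
  map_smul' k x := by
    simp only [dpsi, Pi.smul_apply, smul_eq_mul, Finset.mul_sum, RingHom.id_apply]
    exact Finset.sum_congr rfl fun _ _ => by ring

lemma Dl_apply (n : ℤ) (ψ : ℕ → ℤ) : Dl n ψ = dpsi ψ n := rfl

lemma Dl_single_zero (n p : ℕ) (h : ¬ p ∣ n) : Dl (n : ℤ) (Pi.single p 1) = 0 := by
  rw [Dl_apply, dpsi]
  refine Finset.sum_eq_zero fun q hq => ?_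
  have : q ≠ p := by
    rintro rfl
    exact h (by simpa using Nat.dvd_of_mem_primeFactors hq)
  simp [this]

lemma Dl_single_ne (n p : ℕ) (hn : 0 < n) (hp : p.Prime) (h : p ∣ n) :
    Dl (n : ℤ) (Pi.single p 1) ≠ 0 := by
  have hm : p ∈ n.primeFactors := by simp [hp, h, hn.ne']
  rw [Dl_apply, dpsi, Int.natAbs_natCast, Finset.sum_eq_single_of_mem p hm]
  · have h1 : n / p ≠ 0 := (Nat.div_pos (Nat.le_of_dvd hn h) hp.pos).ne'
    have h2 : n.factorization p ≠ 0 := (hp.factorization_pos_of_dvd hn.ne' h).ne'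
    rw [Pi.single_eq_same, mul_one]
    exact_mod_cast mul_ne_zero h1 h2
  · intro q _ hq
    simp [hq]

def F1 (a b : ℕ) : (ℕ → ℤ) →ₗ[ℤ] ℤ := Dl (a + b) - Dl a - Dl b
def F2 (a b : ℕ) : (ℕ → ℤ) →ₗ[ℤ] ℤ := (a : ℤ) • Dl b - (b : ℤ) • Dl a

lemma bdd_of_supp (S : Finset ℕ) (ψ : ℕ → ℤ) (h : ∀ p, p ∉ S → ψ p = 0) :
    ∃ B : ℤ, ∀ p : ℕ, |ψ p| ≤ B := by
  refine ⟨∑ p ∈ S, |ψ p|, fun p => ?_⟩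
  by_cases hp : p ∈ S
  · exact Finset.single_le_sum (f := fun p => |ψ p|) (fun _ _ => abs_nonneg _) hp
  · rw [h p hp, abs_zero]
    exact Finset.sum_nonneg fun _ _ => abs_nonneg _

lemma memT_iff (a b : ℕ) (ha : 0 < a) (hb : 0 < b) (ψ : ℕ → ℤ) :
    MemT a b ψ ↔ (∀ p, p ∉ (a * b * (a + b)).primeFactors → ψ p = 0) ∧ F1 a b ψ = 0 := by
  have hF : F1 a b ψ = 0 ↔ dpsi ψ ((a : ℤ) + (b : ℤ)) = dpsi ψ (a : ℤ) + dpsi ψ (b : ℤ) := by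
    simp only [F1, LinearMap.sub_apply, Dl_apply]
    constructor <;> intro h <;> linarith
  have hn : a * b * (a + b) ≠ 0 := by positivity
  rw [hF]
  constructor
  · rintro ⟨⟨h1, _⟩, h2, h3⟩
    refine ⟨fun p hp => ?_, h3⟩
    by_cases hpp : p.Prime
    · exact h2 p hpp fun hd => hp (Nat.mem_primeFactors.2 ⟨hpp, hd, hn⟩)
    · exact h1 p hpp
  · rintro ⟨h1, h2⟩
    refine ⟨⟨fun p hp => h1 p fun h => hp (Nat.prime_of_mem_primeFactors h), bdd_of_supp _ _ h1⟩,
      fun p _ hd => h1 p fun h => hd (Nat.dvd_of_mem_primeFactors h), h2⟩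

lemma memT0_iff (a b : ℕ) (ha : 0 < a) (hb : 0 < b) (ψ : ℕ → ℤ) :
    MemT0 a b ψ ↔ (∀ p, p ∉ (a * b * (a + b)).primeFactors → ψ p = 0) ∧ F1 a b ψ = 0 ∧
      F2 a b ψ = 0 := by
  rw [MemT0, memT_iff a b ha hb, and_assoc]
  rfl

lemma exists_pq (a b : ℕ) (ha : 0 < a) (hb : 0 < b)
    (hab : Nat.Coprime a b) (hne : ¬ (a = 1 ∧ b = 1)) :
    ∃ p ∈ (a * b * (a + b)).primeFactors, ∃ q ∈ (a * b * (a + b)).primeFactors,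
      F1 a b (Pi.single p 1) ≠ 0 ∧ F2 a b (Pi.single p 1) = 0 ∧ F2 a b (Pi.single q 1) ≠ 0 := by
  have hn : a * b * (a + b) ≠ 0 := by positivity
  obtain ⟨p, hp, hpc⟩ := Nat.exists_prime_and_dvd (n := a + b) (by omega)
  have hnab : ¬ (p ∣ a ∧ p ∣ b) := fun h => Nat.not_coprime_of_dvd_of_dvd hp.one_lt h.1 h.2 hab
  have hpa : ¬ p ∣ a := fun h => hnab ⟨h, (Nat.dvd_add_right h).1 hpc⟩
  have hpb : ¬ p ∣ b := fun h => hnab ⟨(Nat.dvd_add_left h).1 hpc, h⟩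
  have hc := Dl_single_ne (a + b) p (by omega) hp hpc
  push_cast at hc
  refine ⟨p, Nat.mem_primeFactors.2 ⟨hp, hpc.mul_left _, hn⟩, ?_⟩
  have h1 : F1 a b (Pi.single p 1) ≠ 0 := by
    simpa [F1, Dl_single_zero a p hpa, Dl_single_zero b p hpb] using hc
  have h2 : F2 a b (Pi.single p 1) = 0 := by
    simp [F2, Dl_single_zero a p hpa, Dl_single_zero b p hpb]
  by_cases h : a = 1
  · obtain ⟨q, hq, hqb⟩ := Nat.exists_prime_and_dvd (n := b) (by omega)
    have hqa : ¬ q ∣ a := fun h => Nat.not_coprime_of_dvd_of_dvd hq.one_lt h hqb hab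
    refine ⟨q, Nat.mem_primeFactors.2 ⟨hq, (hqb.mul_left _).mul_right _, hn⟩, h1, h2, ?_⟩
    simp [F2, Dl_single_zero a q hqa, Dl_single_ne b q hb hq hqb, ha.ne']
  · obtain ⟨q, hq, hqa⟩ := Nat.exists_prime_and_dvd (n := a) h
    have hqb : ¬ q ∣ b := fun h => Nat.not_coprime_of_dvd_of_dvd hq.one_lt hqa h hab
    refine ⟨q, Nat.mem_primeFactors.2 ⟨hq, (hqa.mul_right _).mul_right _, hn⟩, h1, h2, ?_⟩
    simp [F2, Dl_single_zero b q hqb, Dl_single_ne a q ha hq hqa, hb.ne']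

def ZExt (S : Finset ℕ) : (S → ℤ) →ₗ[ℤ] (ℕ → ℤ) where
  toFun x n := if h : n ∈ S then x ⟨n, h⟩ else 0
  map_add' x y := by
    ext n
    by_cases h : n ∈ S <;> simp [h]
  map_smul' k x := by
    ext n
    by_cases h : n ∈ S <;> simp [h]

lemma ZExt_inj (S : Finset ℕ) : Function.Injective (ZExt S) := by
  intro x y h
  ext ⟨n, hn⟩
  simpa [ZExt, hn] using congrFun h n

lemma ZExt_notMem (S : Finset ℕ) (x : S → ℤ) (n : ℕ) (h : n ∉ S) : ZExt S x n = 0 := by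
  simp [ZExt, h]

lemma ZExt_surj (S : Finset ℕ) (ψ : ℕ → ℤ) (h : ∀ p, p ∉ S → ψ p = 0) : ∃ x, ZExt S x = ψ := by
  refine ⟨fun n => ψ n, ?_⟩
  ext n
  by_cases hn : n ∈ S
  · simp [ZExt, hn]
  · simp [ZExt, hn, h n hn]

lemma single_supp (S : Finset ℕ) (q : ℕ) (hq : q ∈ S) :
    ∀ p, p ∉ S → (Pi.single q 1 : ℕ → ℤ) p = 0 := by
  intro p hp
  have : p ≠ q := by
    rintro rfl
    exact hp hq
  simp [this]

lemma finrank_ker (S : Finset ℕ) (f g : (ℕ → ℤ) →ₗ[ℤ] ℤ) (p q : ℕ) (hp : p ∈ S) (hq : q ∈ S)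
    (h1 : f (Pi.single p 1) ≠ 0) (h2 : g (Pi.single p 1) = 0) (h3 : g (Pi.single q 1) ≠ 0) :
    Module.finrank ℤ (LinearMap.ker ((f.prod g).comp (ZExt S))) + 2 = S.card := by
  set M := (f.prod g).comp (ZExt S) with hM
  have hrn := Submodule.finrank_quotient_add_finrank (LinearMap.ker M)
  rw [M.quotKerEquivRange.finrank_eq] at hrn
  rw [Module.finrank_fintype_fun_eq_card, Fintype.card_coe] at hrn
  have hle : Module.finrank ℤ (LinearMap.range M) ≤ 2 := by
    have := Submodule.finrank_le (LinearMap.range M)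
    simpa [Module.finrank_prod] using this
  obtain ⟨x, hx⟩ := ZExt_surj S _ (single_supp S p hp)
  obtain ⟨y, hy⟩ := ZExt_surj S _ (single_supp S q hq)
  have hli : LinearIndependent ℤ ![M.rangeRestrict x, M.rangeRestrict y] := by
    rw [LinearIndependent.pair_iff]
    intro s t hst
    have h := congrArg (Submodule.subtype _) hst
    have e1 : s * f (ZExt S x) + t * f (ZExt S y) = 0 := congrArg Prod.fst h
    have e2 : s * g (ZExt S x) + t * g (ZExt S y) = 0 := congrArg Prod.snd h
    rw [hx, hy] at e1 e2
    rw [h2, mul_zero, zero_add] at e2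
    have ht : t = 0 := (mul_eq_zero.1 e2).resolve_right h3
    subst ht
    simp only [zero_mul, add_zero] at e1
    exact ⟨(mul_eq_zero.1 e1).resolve_right h1, rfl⟩
  have hge := hli.fintype_card_le_finrank
  simp only [Fintype.card_fin] at hge
  omega

/-- `𝒯°(a,b)` is a saturated subgroup of `𝒯(a,b)` of rank `ω(ab(a+b)) − 2`;
in particular it is properly contained in `𝒯(a,b)`. -/
theorem T0_saturated_subgroup (a b : ℕ) (ha : 0 < a) (hb : 0 < b)
    (hab : Nat.Coprime a b) (hne : ¬ (a = 1 ∧ b = 1)) :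
    (MemT0 a b 0 ∧
      (∀ ψ φ : ℕ → ℤ, MemT0 a b ψ → MemT0 a b φ → MemT0 a b (ψ + φ)) ∧
      (∀ ψ : ℕ → ℤ, MemT0 a b ψ → MemT0 a b (-ψ))) ∧
    (∀ (k : ℤ) (ψ : ℕ → ℤ), k ≠ 0 → MemT a b ψ → MemT0 a b (k • ψ) → MemT0 a b ψ) ∧
    (∃ ψs : Fin ((a * b * (a + b)).primeFactors.card - 2) → (ℕ → ℤ),
      (∀ i, MemT0 a b (ψs i)) ∧ LinearIndependent ℤ ψs) ∧
    (∀ ψs : Fin ((a * b * (a + b)).primeFactors.card - 1) → (ℕ → ℤ),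
      (∀ i, MemT0 a b (ψs i)) → ¬ LinearIndependent ℤ ψs) ∧
    (∃ ψ : ℕ → ℤ, MemT a b ψ ∧ ¬ MemT0 a b ψ) := by
  have m0 := memT0_iff a b ha hb
  have mT := memT_iff a b ha hb
  obtain ⟨p, hp, q, hq, h1, h2, h3⟩ := exists_pq a b ha hb hab hne
  set S := (a * b * (a + b)).primeFactors with hS
  have hk := finrank_ker S (F1 a b) (F2 a b) p q hp hq h1 h2 h3
  set K := LinearMap.ker (((F1 a b).prod (F2 a b)).comp (ZExt S)) with hK
  have hmem : ∀ x, x ∈ K ↔ MemT0 a b (ZExt S x) := by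
    intro x
    rw [m0, hK, LinearMap.mem_ker, LinearMap.comp_apply, LinearMap.prod_apply]
    change (F1 a b (ZExt S x), F2 a b (ZExt S x)) = 0 ↔ _
    rw [Prod.mk_eq_zero]
    exact ⟨fun h => ⟨ZExt_notMem S x, h⟩, fun h => h.2⟩
  refine ⟨⟨?_, ?_, ?_⟩, ?_, ?_, ?_, ?_⟩
  · rw [m0]; simp
  · intro ψ φ hψ hφ
    rw [m0] at *
    refine ⟨fun p hp => ?_, ?_, ?_⟩
    · simp [hψ.1 p hp, hφ.1 p hp]
    · rw [map_add, hψ.2.1, hφ.2.1, add_zero]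
    · rw [map_add, hψ.2.2, hφ.2.2, add_zero]
  · intro ψ hψ
    rw [m0] at *
    refine ⟨fun p hp => ?_, ?_, ?_⟩
    · simp [hψ.1 p hp]
    · rw [map_neg, hψ.2.1, neg_zero]
    · rw [map_neg, hψ.2.2, neg_zero]
  · intro k ψ hk0 hT h0
    rw [m0] at *
    rw [mT] at hT
    refine ⟨hT.1, hT.2, ?_⟩
    have := h0.2.2
    rw [map_smul, smul_eq_mul] at this
    exact (mul_eq_zero.1 this).resolve_left hk0
  · have hr : Module.finrank ℤ K = S.card - 2 := by omega
    let B := Module.finBasisOfFinrankEq ℤ K hr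
    refine ⟨fun i => ZExt S (B i : S → ℤ), fun i => (hmem _).1 (B i).2, ?_⟩
    have hinj : Function.Injective ((ZExt S).comp K.subtype) :=
      (ZExt_inj S).comp Subtype.val_injective
    exact B.linearIndependent.map' ((ZExt S).comp K.subtype) (LinearMap.ker_eq_bot.2 hinj)
  · intro ψs hψ hli
    have hex : ∀ i, ∃ x : K, ZExt S (x : S → ℤ) = ψs i := by
      intro i
      obtain ⟨x, hx⟩ := ZExt_surj S (ψs i) ((m0 _).1 (hψ i)).1
      exact ⟨⟨x, (hmem x).2 (hx ▸ hψ i)⟩, hx⟩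
    choose x hx using hex
    have he : ψs = ((ZExt S).comp K.subtype) ∘ x := by
      funext i
      exact (hx i).symm
    rw [he] at hli
    have hge := (LinearIndependent.of_comp _ hli).fintype_card_le_finrank
    simp only [Fintype.card_fin] at hge
    omega
  · refine ⟨F1 a b (Pi.single q 1) • Pi.single p 1 - F1 a b (Pi.single p 1) • Pi.single q 1,
      ?_, ?_⟩
    · rw [mT]
      refine ⟨fun r hr => ?_, ?_⟩
      · rw [Pi.sub_apply, Pi.smul_apply, Pi.smul_apply, single_supp S p hp r hr,
          single_supp S q hq r hr, smul_zero, smul_zero, sub_zero]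
      · rw [map_sub, map_smul, map_smul, smul_eq_mul, smul_eq_mul]; ring
    · rw [m0]
      rintro ⟨_, _, h⟩
      rw [map_sub, map_smul, map_smul, h2, smul_zero, zero_sub, neg_eq_zero, smul_eq_mul] at h
      exact mul_ne_zero h1 h3 h
end
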